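/- Let K > 0, A > 0, and ε ∈ (0,1). Let Ψ : ℝ² × [0,∞) × (−π/2,π/2) × (−π,π) → ℝ be continuously differentiable in (ι₁,ι₂,ψ) with |Ψ| ≤ e^{−Kη}, |∂_{ι₁}Ψ| ≤ e^{−Kη}, |∂_{ι₂}Ψ| ≤ e^{−Kη} and |∂_ψΨ| ≤ e^{−Kη} everywhere. Let b₁, b₂, c be measurable coefficient functions of (η,φ,ψ) with |b₁|, |b₂|, |c| ≤ A. Fix ι = (ι₁,ι₂) and define S₂(η,φ,ψ) := ε⁻¹ sinφ · χ̃(ε⁻¹φ) · (d/dη)[χ(εη)] · Ψ(ι,η,φ,ψ) + b₁ cosφ · χ̃(ε⁻¹φ) χ(εη) ∂_{ι₁}Ψ + b₂ cosφ · χ̃(ε⁻¹φ) χ(εη) ∂_{ι₂}Ψ + c · χ̃(ε⁻¹φ) χ(εη) ∂_ψΨ. Then both ( ε ∫₀^∞ ∫_{−π/2}^{π/2} ∫_{−π}^{π} (1+η)² |S₂|² cosφ dψ dφ dη )^{1/2} ≤ C ε^{1/2} and ( ε ∫₀^∞ (1+η)² ( ∫_{−π/2}^{π/2} ∫_{−π}^{π}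 |S₂| cosφ dψ dφ )² dη )^{1/2} ≤ C ε^{1/2}, where C depends only on K and A (not on ε, ι, or Ψ). -/

import Mathlib

open MeasureTheory Real Set

noncomputable section

/-- A smooth cut-off function: `0 ≤ χ ≤ 1`, `χ = 1` on `{|y| ≤ 1}`, `χ = 0` on `{|y| ≥ 2}`. -/
def IsCutoff (χ : ℝ → ℝ) : Prop :=
  ContDiff ℝ (⊤ : ℕ∞) χ ∧ (∀ y, χ y ∈ Icc (0:ℝ) 1) ∧ (∀ y, |y| ≤ 1 → χ y = 1) ∧
    (∀ y, 2 ≤ |y| → χ y = 0)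

/-- The cut-off boundary layer `U = χ̃(ε⁻¹φ) χ(εη) Ψ(η,φ,ψ)`, where `χ̃ = 1 - χ`. -/
def cutU (χ : ℝ → ℝ) (ε : ℝ) (Ψ : ℝ → ℝ → ℝ → ℝ) (η φ ψ : ℝ) : ℝ :=
  (1 - χ (ε⁻¹ * φ)) * χ (ε * η) * Ψ η φ ψ

lemma cutoff_deriv_bound (χ : ℝ → ℝ) (hχ : IsCutoff χ) : ∃ M ≥ (0:ℝ), ∀ y, |deriv χ y| ≤ M := by
  obtain ⟨h1, _, _, h4⟩ := hχ
  have hc : HasCompactSupport χ := by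
    refine HasCompactSupport.intro (K := Icc (-2) 2) isCompact_Icc ?_
    intro x hx
    apply h4
    by_contra h
    rw [not_le, abs_lt] at h
    exact hx ⟨h.1.le, h.2.le⟩
  have hcont : Continuous (deriv χ) := h1.continuous_deriv (by norm_num)
  obtain ⟨M, hM⟩ := hc.deriv.exists_bound_of_continuous hcont
  exact ⟨M, (norm_nonneg _).trans (hM 0), hM⟩

lemma weight_bound (K : ℝ) (hK : 0 < K) (η : ℝ) (hη : 0 ≤ η) :
    (1+η)^2 * (Real.exp (-K*η))^2 ≤ (1+2/K)^2 * Real.exp (-K*η) := by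
  have h1 : 1 + η ≤ (1+2/K) * Real.exp (K*η/2) := by
    have h := Real.add_one_le_exp (K*η/2)
    have h2 : (1+2/K) * (K*η/2+1) = 1 + η + K*η/2 + 2/K := by field_simp; ring
    have h3 : (1+2/K) * (K*η/2+1) ≤ (1+2/K) * Real.exp (K*η/2) := by gcongr
    have h4 : 0 ≤ K*η/2 := by positivity
    have h5 : 0 ≤ 2/K := by positivity
    linarith
  have h2 : (1+η)^2 ≤ ((1+2/K) * Real.exp (K*η/2))^2 := by gcongr
  have h3 : Real.exp (-K*η) = Real.exp (K*η/2)^2 * Real.exp (-K*η)^2 := by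
    rw [← Real.exp_nat_mul, ← Real.exp_nat_mul, ← Real.exp_add]
    congr 1; push_cast; ring
  calc (1+η)^2 * (Real.exp (-K*η))^2
      ≤ ((1+2/K) * Real.exp (K*η/2))^2 * (Real.exp (-K*η))^2 := by gcongr
    _ = (1+2/K)^2 * (Real.exp (K*η/2)^2 * Real.exp (-K*η)^2) := by ring
    _ = _ := by rw [← h3]

lemma ang_bound (f : ℝ → ℝ → ℝ) (B : ℝ)
    (h : ∀ φ ∈ Ioo (-(π/2)) (π/2), ∀ ψ ∈ Ioo (-π) π, |f φ ψ| ≤ B) :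
    |∫ φ in Ioo (-(π/2)) (π/2), ∫ ψ in Ioo (-π) π, f φ ψ| ≤ B * (2*π) * π := by
  have hpi := Real.pi_pos
  have h1 : ∀ φ ∈ Ioo (-(π/2)) (π/2), ‖∫ ψ in Ioo (-π) π, f φ ψ‖ ≤ B * (2*π) := by
    intro φ hφ
    have := norm_setIntegral_le_of_norm_le_const (μ := volume) (s := Ioo (-π) π)
      (f := f φ) (C := B) (by simp) (fun ψ hψ => h φ hφ ψ hψ)
    rw [Real.volume_real_Ioo_of_le (by linarith)] at this
    convert this using 2; ring
  have := norm_setIntegral_le_of_norm_le_const (μ := volume) (s := Ioo (-(π/2)) (π/2))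
      (C := B * (2*π)) (by simp) h1
  rw [Real.volume_real_Ioo_of_le (by linarith)] at this
  refine le_trans this (le_of_eq ?_)
  ring

/-- Weighted `L²` and `L²_ηL¹_w` bounds of order `ε^{1/2}` for the
tangential source term `S₂`. -/
theorem s2_bounds (χ : ℝ → ℝ) (hχ : IsCutoff χ) (K A : ℝ) (hK : 0 < K) (hA : 0 < A) :
    ∃ C > (0:ℝ), ∀ ε ∈ Ioo (0:ℝ) 1,
      ∀ Ψ : ℝ → ℝ → ℝ → ℝ → ℝ → ℝ, ∀ b₁ b₂ c : ℝ → ℝ → ℝ → ℝ, ∀ ι₁ ι₂ : ℝ,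
      (∀ s₁ s₂ : ℝ, ∀ η ≥ (0:ℝ), ∀ φ ∈ Ioo (-(π/2)) (π/2), ∀ ψ ∈ Ioo (-π) π,
        DifferentiableAt ℝ (fun t => Ψ t s₂ η φ ψ) s₁ ∧
        DifferentiableAt ℝ (fun t => Ψ s₁ t η φ ψ) s₂ ∧
        DifferentiableAt ℝ (fun t => Ψ s₁ s₂ η φ t) ψ) →
      (∀ s₁ s₂ : ℝ, ∀ η ≥ (0:ℝ), ∀ φ ∈ Ioo (-(π/2)) (π/2), ∀ ψ ∈ Ioo (-π) π,
        |Ψ s₁ s₂ η φ ψ| ≤ Real.exp (-K * η) ∧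
        |deriv (fun t => Ψ t s₂ η φ ψ) s₁| ≤ Real.exp (-K * η) ∧
        |deriv (fun t => Ψ s₁ t η φ ψ) s₂| ≤ Real.exp (-K * η) ∧
        |deriv (fun t => Ψ s₁ s₂ η φ t) ψ| ≤ Real.exp (-K * η)) →
      Measurable (fun p : ℝ × ℝ × ℝ => b₁ p.1 p.2.1 p.2.2) →
      Measurable (fun p : ℝ × ℝ × ℝ => b₂ p.1 p.2.1 p.2.2) →
      Measurable (fun p : ℝ × ℝ × ℝ => c p.1 p.2.1 p.2.2) →
      (∀ η φ ψ : ℝ, |b₁ η φ ψ| ≤ A ∧ |b₂ η φ ψ| ≤ A ∧ |c η φ ψ| ≤ A) →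
      ∀ S₂ : ℝ → ℝ → ℝ → ℝ,
      (∀ η φ ψ : ℝ, S₂ η φ ψ =
        ε⁻¹ * Real.sin φ * (1 - χ (ε⁻¹ * φ)) * deriv (fun t => χ (ε * t)) η * Ψ ι₁ ι₂ η φ ψ
        + b₁ η φ ψ * Real.cos φ * (1 - χ (ε⁻¹ * φ)) * χ (ε * η) *
            deriv (fun t => Ψ t ι₂ η φ ψ) ι₁
        + b₂ η φ ψ * Real.cos φ * (1 - χ (ε⁻¹ * φ)) * χ (ε * η) *
            deriv (fun t => Ψ ι₁ t η φ ψ) ι₂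
        + c η φ ψ * (1 - χ (ε⁻¹ * φ)) * χ (ε * η) * deriv (fun t => Ψ ι₁ ι₂ η φ t) ψ) →
      Real.sqrt (ε * ∫ η in Ioi (0:ℝ), ∫ φ in Ioo (-(π/2)) (π/2), ∫ ψ in Ioo (-π) π,
          (1+η)^2 * (S₂ η φ ψ)^2 * Real.cos φ) ≤ C * Real.sqrt ε ∧
      Real.sqrt (ε * ∫ η in Ioi (0:ℝ), (1+η)^2 * (∫ φ in Ioo (-(π/2)) (π/2),
          ∫ ψ in Ioo (-π) π, |S₂ η φ ψ| * Real.cos φ)^2) ≤ C * Real.sqrt ε := by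
  obtain ⟨M, hM0, hM⟩ := cutoff_deriv_bound χ hχ
  have hpi := Real.pi_pos
  set I : ℝ := ∫ η in Ioi (0:ℝ), Real.exp (-K*η) with hI
  have hint : IntegrableOn (fun η : ℝ => Real.exp (-K*η)) (Ioi 0) := exp_neg_integrableOn_Ioi 0 hK
  set D : ℝ := M + 3*A with hD
  have hD0 : 0 ≤ D := by positivity
  set X : ℝ := (D^2 * (2*π) * π * (1+2/K)^2) * I with hX
  set Y : ℝ := ((D * (2*π) * π)^2 * (1+2/K)^2) * I with hY
  refine ⟨Real.sqrt X + Real.sqrt Y + 1, by positivity, ?_⟩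
  intro ε hε Ψ b₁ b₂ c ι₁ ι₂ _ hΨ _ _ _ hb S₂ hS
  obtain ⟨hχ1, hχ2, -, -⟩ := hχ
  have hε0 : 0 < ε := hε.1
  have hder : ∀ η, |ε⁻¹ * deriv (fun t => χ (ε * t)) η| ≤ M := by
    intro η
    have : deriv (fun t => χ (ε * t)) η = ε * deriv χ (ε * η) := by
      rw [deriv_comp_mul_left]; simp
    rw [this, inv_mul_cancel_left₀ hε0.ne']
    exact hM _
  have hSb : ∀ η ≥ (0:ℝ), ∀ φ ∈ Ioo (-(π/2)) (π/2), ∀ ψ ∈ Ioo (-π) π,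
      |S₂ η φ ψ| ≤ D * Real.exp (-K*η) := by
    intro η hη φ hφ ψ hψ
    obtain ⟨p0, p1, p2, p3⟩ := hΨ ι₁ ι₂ η hη φ hφ ψ hψ
    obtain ⟨q1, q2, q3⟩ := hb η φ ψ
    have hE := Real.exp_pos (-K*η)
    set E := Real.exp (-K*η)
    have x1 : |1 - χ (ε⁻¹ * φ)| ≤ 1 := by
      have := hχ2 (ε⁻¹ * φ)
      rw [abs_le]; constructor <;> linarith [this.1, this.2]
    have x2 : |χ (ε * η)| ≤ 1 := by
      have := hχ2 (ε * η)
      rw [abs_le]; constructor <;> linarith [this.1, this.2]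
    have t0 : |ε⁻¹ * Real.sin φ * (1 - χ (ε⁻¹ * φ)) * deriv (fun t => χ (ε * t)) η
        * Ψ ι₁ ι₂ η φ ψ| ≤ M * 1 * 1 * E := by
      have : ε⁻¹ * Real.sin φ * (1 - χ (ε⁻¹ * φ)) * deriv (fun t => χ (ε * t)) η
        * Ψ ι₁ ι₂ η φ ψ = (ε⁻¹ * deriv (fun t => χ (ε * t)) η) * Real.sin φ
          * (1 - χ (ε⁻¹ * φ)) * Ψ ι₁ ι₂ η φ ψ := by ring
      rw [this, abs_mul, abs_mul, abs_mul]
      gcongr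
      · exact hder η
      · exact Real.abs_sin_le_one φ
    have t1 : ∀ b d : ℝ, |b| ≤ A → |d| ≤ E →
        |b * Real.cos φ * (1 - χ (ε⁻¹ * φ)) * χ (ε * η) * d| ≤ A * 1 * 1 * 1 * E := by
      intro b d h1 h2
      rw [abs_mul, abs_mul, abs_mul, abs_mul]
      gcongr
      exact Real.abs_cos_le_one φ
    have t3 : |c η φ ψ * (1 - χ (ε⁻¹ * φ)) * χ (ε * η) * deriv (fun t => Ψ ι₁ ι₂ η φ t) ψ|
        ≤ A * 1 * 1 * E := by
      rw [abs_mul, abs_mul, abs_mul]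
      gcongr
    have t1' := t1 _ _ q1 p1
    have t2' := t1 _ _ q2 p2
    rw [hS]
    refine (abs_add_le _ _).trans ?_
    refine (add_le_add_left ((abs_add_le _ _).trans
      (add_le_add_left (abs_add_le _ _) _)) _).trans ?_
    have : D * E = M*E + 3*(A*E) := by rw [hD]; ring
    linarith
  have hcos : ∀ φ ∈ Ioo (-(π/2)) (π/2), |Real.cos φ| ≤ 1 := fun φ _ => Real.abs_cos_le_one φ
  have key : ∀ (F : ℝ → ℝ) (P : ℝ), (∀ η ∈ Ioi (0:ℝ), |F η| ≤ P * Real.exp (-K*η)) →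
      Real.sqrt (ε * ∫ η in Ioi (0:ℝ), F η) ≤ Real.sqrt (P * I) * Real.sqrt ε := by
    intro F P h
    have h1 : ‖∫ η in Ioi (0:ℝ), F η‖ ≤ ∫ η in Ioi (0:ℝ), P * Real.exp (-K*η) := by
      apply norm_integral_le_of_norm_le (hint.const_mul P)
      exact (ae_restrict_mem measurableSet_Ioi).mono h
    rw [integral_const_mul] at h1
    rw [mul_comm (Real.sqrt (P * I)), ← Real.sqrt_mul hε0.le]
    apply Real.sqrt_le_sqrt
    exact mul_le_mul_of_nonneg_left ((le_abs_self _).trans h1) hε0.le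
  constructor
  · refine (key _ (D^2 * (2*π) * π * (1+2/K)^2) ?_).trans ?_
    · intro η hη
      have hη0 : (0:ℝ) ≤ η := le_of_lt hη
      refine (ang_bound _ ((1+η)^2 * (D * Real.exp (-K*η))^2 * 1) ?_).trans ?_
      · intro φ hφ ψ hψ
        have := hSb η hη0 φ hφ ψ hψ
        rw [abs_mul, abs_mul, abs_of_nonneg (sq_nonneg (1+η)), abs_pow]
        gcongr
        exact hcos φ hφ
      · have := mul_le_mul_of_nonneg_left (weight_bound K hK η hη0)
          (show 0 ≤ D^2 * (2*π) * π by positivity)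
        linarith
    · gcongr
      linarith [Real.sqrt_nonneg Y]
  · refine (key _ ((D * (2*π) * π)^2 * (1+2/K)^2) ?_).trans ?_
    · intro η hη
      have hη0 : (0:ℝ) ≤ η := le_of_lt hη
      have h1 := ang_bound (fun φ ψ => |S₂ η φ ψ| * Real.cos φ) (D * Real.exp (-K*η) * 1) (by
        intro φ hφ ψ hψ
        have := hSb η hη0 φ hφ ψ hψ
        rw [abs_mul, abs_abs]
        gcongr
        exact hcos φ hφ)
      rw [abs_mul, abs_of_nonneg (sq_nonneg (1+η)), abs_pow]
      have h2 := mul_le_mul_of_nonneg_left (weight_bound K hK η hη0)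
          (show 0 ≤ (D * (2*π) * π)^2 by positivity)
      refine (mul_le_mul_of_nonneg_left (pow_le_pow_left₀ (abs_nonneg _) h1 2)
        (sq_nonneg (1+η))).trans ?_
      linarith
    · gcongr
      linarith [Real.sqrt_nonneg X]
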